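/- arXiv:2409.04277 — 2 statements merged into one kernel-verified Lean document; each statement's English description precedes it below -/
import Mathlib

section
/- Assume k := 2 f''(1) + 6 f'(1) ≠ 0. Let 0 < c₀ < c_s and let ξ : (c₀, c_s) → (0,1) satisfy, for every c ∈ (c₀, c_s): N_c(ξ(c)) = 0, N_c(x) < 0 for every x ∈ (0, ξ(c)), ∂_x N_c(ξ(c)) > 0, and ξ(c) → 0 as c → c_s⁻. Define P(c) := (c/2) ∫_0^{ξ(c)} x² / ((1−x) √(−N_c(x))) dx. Then P(c)/ν_c³ → 6 c_s / k² as c → c_s⁻. -/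
open Real MeasureTheory Filter Topology

/-!
For `x ≠ 0` one has `-N_c(x) = x² (g(x) - c²)` with `g(x) = 4 (1 - x) F(1 - x) / x²`, so
`c² = g(ξ(c))`, and setting `g(0) = c_s²` gives `ν_c² = g(0) - g(ξ(c))`. The quotient
`P(c) / ν_c³` is therefore `c / 2` times a function of the amplitude `r = ξ(c)` alone:
`∫_0^r x / ((1 - x) √(g(x) - g(r))) dx / (g(0) - g(r))^{3/2}`.

Taylor expansion of `F` at `1` shows that `g` is strictly differentiable at `0` with
`g'(0) = k / 3`, which is negative because `c < c_s`. Put `κ = -k / 3` and `x = r t`. As `r → 0⁺`,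
`(g(r t) - g(r)) / r` converges to `κ (1 - t)`, and strict differentiability bounds it below by
`κ (1 - t) / 2` uniformly in `t`. By dominated convergence the integral is equivalent to
`r^{3/2} ∫_0^1 t / √(κ (1 - t)) dt = 4 r^{3/2} / (3 √κ)`, while
`(g(0) - g(r))^{3/2} ~ (κ r)^{3/2}`; the limit is `(c_s / 2) · 4 / (3 κ²) = 6 c_s / k²`.
-/

section Calculus

variable {g g' : ℝ → ℝ} {a m : ℝ}

theorem eventually_forall_mem_Icc {α : Type*} [LinearOrder α] [TopologicalSpace α] [OrderTopology α]
    {a : α} {p : α → Prop} (hp : ∀ᶠ x in 𝓝 a, p x) :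
    ∀ᶠ r in 𝓝[>] a, ∀ x ∈ Set.Icc a r, p x :=
  ((tendsto_const_nhds.Icc tendsto_id).eventually hp.smallSets).filter_mono nhdsWithin_le_nhds

theorem hasStrictDerivAt_of_tendsto_nhdsNE (hg : ContinuousAt g a)
    (hderiv : ∀ᶠ x in 𝓝[≠] a, HasDerivAt g (g' x) x) (hlim : Tendsto g' (𝓝[≠] a) (𝓝 m)) :
    HasStrictDerivAt g m a := by
  have hslope : Tendsto (fun x => (g x - g a) / (x - a)) (𝓝[≠] a) (𝓝 m) := by
    refine HasDerivAt.lhopital_zero_nhdsNE (hderiv.mono fun x hx => hx.sub_const (g a))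
      (.of_forall fun x => (hasDerivAt_id x).sub_const a) (by simp)
      (tendsto_sub_nhds_zero_iff.2 (hg.tendsto.mono_left nhdsWithin_le_nhds))
      (tendsto_sub_nhds_zero_iff.2 (tendsto_id.mono_left nhdsWithin_le_nhds)) (by simpa using hlim)
  have hderiv_at : HasDerivAt g m a := by
    refine hasDerivAt_iff_tendsto_slope.2 (hslope.congr fun x => ?_)
    rw [slope_def_field]
  have hderiv_near : ∀ᶠ x in 𝓝 a, HasDerivAt g (Function.update g' a m x) x := by
    filter_upwards [eventually_nhdsWithin_iff.1 hderiv] with x hx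
    rcases eq_or_ne x a with rfl | hxa
    · simpa using hderiv_at
    · simpa [hxa] using hx hxa
  simpa using hasStrictDerivAt_of_hasDerivAt_of_continuousAt hderiv_near
    (continuousAt_update_same.2 hlim)

theorem nonpos_of_hasDerivAt_of_frequently_le (hg : HasDerivAt g m a)
    (hle : ∃ᶠ x in 𝓝[>] a, g x ≤ g a) : m ≤ 0 := by
  have hslope : Tendsto (slope g a) (𝓝[>] a) (𝓝 m) :=
    (hasDerivAt_iff_tendsto_slope.1 hg).mono_left (nhdsWithin_mono _ fun _ hx => ne_of_gt hx)
  refine le_of_tendsto_of_frequently hslope ?_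
  refine (hle.and_eventually self_mem_nhdsWithin).mono fun x ⟨hx, hax⟩ => ?_
  rw [slope_def_field]
  exact div_nonpos_of_nonpos_of_nonneg (sub_nonpos.2 hx) (sub_pos.2 hax).le

theorem eventually_mul_sub_le_sub_of_hasStrictDerivAt {c κ : ℝ} (hg : HasStrictDerivAt g (-κ) a)
    (hc : c < κ) : ∀ᶠ r in 𝓝[>] a, ∀ x ∈ Set.Icc a r, c * (r - x) ≤ g x - g r := by
  have hlittle : ∀ᶠ p : ℝ × ℝ in 𝓝 a ×ˢ 𝓝 a,
      |g p.1 - g p.2 - (p.1 - p.2) * (-κ)| ≤ (κ - c) * |p.1 - p.2| := by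
    rw [← nhds_prod_eq]
    simpa using (hasStrictDerivAt_iff_hasStrictFDerivAt.1 hg).isLittleO.def (sub_pos.2 hc)
  obtain ⟨s, hs, hbound⟩ := eventually_prod_self_iff'.1 hlittle
  filter_upwards [eventually_forall_mem_Icc hs, self_mem_nhdsWithin] with r hr har x hx
  have hxr := hbound x (hr x hx) r (hr r ⟨le_of_lt har, le_rfl⟩)
  rw [abs_of_nonpos (sub_nonpos.2 hx.2)] at hxr
  linarith [(abs_le.1 hxr).1]

theorem eventually_continuousOn_Icc_of_hasStrictDerivAt (hg : HasStrictDerivAt g m a) :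
    ∀ᶠ r in 𝓝[>] a, ContinuousOn g (Set.Icc a r) := by
  obtain ⟨K, s, hs, hlip⟩ := hg.hasStrictFDerivAt.exists_lipschitzOnWith
  filter_upwards [eventually_forall_mem_Icc hs] with r hr
  exact hlip.continuousOn.mono hr

end Calculus

section QuadraticQuotient

variable {φ φ' φ'' : ℝ → ℝ} {m : ℝ}

theorem tendsto_div_sq_of_hasDerivAt (hφ : ∀ᶠ x in 𝓝 0, HasDerivAt φ (φ' x) x)
    (hφ' : HasDerivAt φ' m 0) (hφ0 : φ 0 = 0) (hφ'0 : φ' 0 = 0) :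
    Tendsto (fun x => φ x / x ^ 2) (𝓝[≠] 0) (𝓝 (m / 2)) := by
  refine HasDerivAt.lhopital_zero_nhdsNE (hφ.filter_mono nhdsWithin_le_nhds)
    (.of_forall fun x => hasDerivAt_pow 2 x)
    (eventually_mem_nhdsWithin.mono fun x hx => by simpa using hx) ?_ ?_ ?_
  · simpa only [hφ0] using hφ.self_of_nhds.continuousAt.tendsto.mono_left nhdsWithin_le_nhds
  · exact tendsto_nhdsWithin_of_tendsto_nhds (by simpa using (continuous_pow 2).tendsto (0 : ℝ))
  · refine ((hasDerivAt_iff_tendsto_slope.1 hφ').div_const 2).congr fun x => ?_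
    simp only [slope_def_field, hφ'0, sub_zero, Nat.cast_ofNat, Nat.add_one_sub_one, pow_one]
    ring

theorem tendsto_mul_deriv_sub_two_mul_div_cube (hφ : ∀ᶠ x in 𝓝 0, HasDerivAt φ (φ' x) x)
    (hφ' : ∀ᶠ x in 𝓝 0, HasDerivAt φ' (φ'' x) x) (hφ'' : HasDerivAt φ'' m 0)
    (hφ0 : φ 0 = 0) (hφ'0 : φ' 0 = 0) :
    Tendsto (fun x => (x * φ' x - 2 * φ x) / x ^ 3) (𝓝[≠] 0) (𝓝 (m / 6)) := by
  have hsecond : Tendsto (fun x => (φ'' x - φ'' 0) / x) (𝓝[≠] 0) (𝓝 m) := by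
    refine (hasDerivAt_iff_tendsto_slope.1 hφ'').congr fun x => ?_
    rw [slope_def_field, sub_zero]
  have hfirst : Tendsto (fun x => (φ' x - φ'' 0 * x) / x ^ 2) (𝓝[≠] 0) (𝓝 (m / 2)) := by
    refine tendsto_div_sq_of_hasDerivAt (φ' := fun x => φ'' x - φ'' 0) ?_ (hφ''.sub_const _)
      (by simp [hφ'0]) (sub_self _)
    filter_upwards [hφ'] with x hx
    exact (hx.sub ((hasDerivAt_id x).const_mul (φ'' 0))).congr_deriv (by simp)
  have hnum : ∀ᶠ x in 𝓝 0, HasDerivAt (fun x => x * φ' x - 2 * φ x) (x * φ'' x - φ' x) x := by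
    filter_upwards [hφ, hφ'] with x hx hx'
    exact (((hasDerivAt_id x).mul hx').sub (hx.const_mul 2)).congr_deriv (by simp; ring)
  refine HasDerivAt.lhopital_zero_nhdsNE (hnum.filter_mono nhdsWithin_le_nhds)
    (.of_forall fun x => hasDerivAt_pow 3 x)
    (eventually_mem_nhdsWithin.mono fun x hx => by simpa using hx) ?_ ?_ ?_
  · simpa [hφ0, hφ'0] using
      hnum.self_of_nhds.continuousAt.tendsto.mono_left nhdsWithin_le_nhds
  · exact tendsto_nhdsWithin_of_tendsto_nhds (by simpa using (continuous_pow 3).tendsto (0 : ℝ))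
  · have hdiff := (hsecond.sub hfirst).div_const 3
    rw [show (m - m / 2) / 3 = m / 6 by ring] at hdiff
    refine hdiff.congr' ?_
    filter_upwards [self_mem_nhdsWithin] with x (hx : x ≠ 0)
    field_simp
    ring

theorem hasStrictDerivAt_update_div_sq (hφ : ∀ᶠ x in 𝓝 0, HasDerivAt φ (φ' x) x)
    (hφ' : ∀ᶠ x in 𝓝 0, HasDerivAt φ' (φ'' x) x) (hφ'' : HasDerivAt φ'' m 0)
    (hφ0 : φ 0 = 0) (hφ'0 : φ' 0 = 0) :
    HasStrictDerivAt (Function.update (fun x => φ x / x ^ 2) 0 (φ'' 0 / 2)) (m / 6) 0 := by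
  refine hasStrictDerivAt_of_tendsto_nhdsNE
    (continuousAt_update_same.2 (tendsto_div_sq_of_hasDerivAt hφ hφ'.self_of_nhds hφ0 hφ'0)) ?_
    (tendsto_mul_deriv_sub_two_mul_div_cube hφ hφ' hφ'' hφ0 hφ'0)
  filter_upwards [hφ.filter_mono nhdsWithin_le_nhds, self_mem_nhdsWithin] with x hx (hx0 : x ≠ 0)
  have hquot : HasDerivAt (fun x => φ x / x ^ 2) ((x * φ' x - 2 * φ x) / x ^ 3) x :=
    (hx.div (hasDerivAt_pow 2 x) (pow_ne_zero 2 hx0)).congr_deriv (by field_simp; simp; ring)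
  refine hquot.congr_of_eventuallyEq ?_
  filter_upwards [isOpen_ne.mem_nhds hx0] with y hy
  exact Function.update_of_ne hy _ _

end QuadraticQuotient

section AbelIntegral

theorem intervalIntegrable_one_div_sqrt_one_sub :
    IntervalIntegrable (fun t : ℝ => 1 / √(1 - t)) volume 0 1 := by
  have hrpow : IntervalIntegrable (fun t : ℝ => t ^ (-(1 / 2) : ℝ)) volume 0 1 :=
    intervalIntegral.intervalIntegrable_rpow' (by norm_num)
  have hreflect := (hrpow.comp_sub_left 1).symm
  rw [sub_zero, sub_self] at hreflect
  refine hreflect.congr fun t ht => ?_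
  rw [Set.uIoc_of_le zero_le_one] at ht
  rw [rpow_neg (sub_nonneg.2 ht.2), ← sqrt_eq_rpow, one_div]

theorem integral_div_sqrt_one_sub : ∫ t in (0 : ℝ)..1, t / √(1 - t) = 4 / 3 := by
  calc ∫ t in (0 : ℝ)..1, t / √(1 - t)
      = ∫ t in (0 : ℝ)..1, (1 - t) / √t := by
        simpa using intervalIntegral.integral_comp_sub_left (a := 0) (b := 1)
          (fun t : ℝ => (1 - t) / √t) 1
    _ = ∫ t in (0 : ℝ)..1, (t ^ (-(1 / 2) : ℝ) - t ^ (1 / 2 : ℝ)) := by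
        refine intervalIntegral.integral_congr_ae (.of_forall fun t ht => ?_)
        rw [Set.uIoc_of_le zero_le_one] at ht
        rw [rpow_neg ht.1.le, ← sqrt_eq_rpow, sub_div, div_sqrt, one_div]
    _ = 4 / 3 := by
        rw [intervalIntegral.integral_sub
          (intervalIntegral.intervalIntegrable_rpow' (by norm_num))
          (intervalIntegral.intervalIntegrable_rpow' (by norm_num)),
          integral_rpow (by norm_num), integral_rpow (by norm_num)]
        norm_num

variable {g h : ℝ → ℝ} {κ a : ℝ}

theorem tendsto_sub_comp_mul_div {m : ℝ} (hg : HasDerivAt g m 0) (s t : ℝ) :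
    Tendsto (fun r => (g (r * s) - g (r * t)) / r) (𝓝[>] 0) (𝓝 (m * (s - t))) := by
  have hcomp (u : ℝ) : HasDerivAt (fun r => g (r * u)) (m * u) 0 := by
    have hg' : HasDerivAt g m (0 * u) := by rwa [zero_mul]
    exact (hg'.comp 0 ((hasDerivAt_id 0).mul_const u)).congr_deriv (by rw [one_mul])
  have hslope := ((hcomp s).sub (hcomp t)).tendsto_slope_zero_right
  rw [← mul_sub] at hslope
  refine hslope.congr fun r => ?_
  simp [div_eq_inv_mul]

/-- The integrand of `∫ x in 0..r, h x / √(g x - g r)` after the substitution `x = r * t` and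
division by `√r ^ 3`. -/
noncomputable def rescaledIntegrand (g h : ℝ → ℝ) (r t : ℝ) : ℝ :=
  h (r * t) / r / √((g (r * t) - g r) / r)

theorem integral_div_sqrt_sub_div_sqrt_cube {r : ℝ} (hr : 0 < r) :
    (∫ x in (0 : ℝ)..r, h x / √(g x - g r)) / √r ^ 3 =
      ∫ t in (0 : ℝ)..1, rescaledIntegrand g h r t := by
  have hscale : ∫ x in (0 : ℝ)..r, h x / √(g x - g r) =
      r * ∫ t in (0 : ℝ)..1, h (r * t) / √(g (r * t) - g r) := by
    simpa using (intervalIntegral.mul_integral_comp_mul_left (a := 0) (b := 1)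
      (f := fun x => h x / √(g x - g r)) (c := r)).symm
  have hfactor : r / √r ^ 3 = √r / r := by
    rw [div_eq_div_iff (pow_ne_zero 3 (sqrt_pos.2 hr).ne') hr.ne']
    linear_combination (-(√r ^ 2) - r) * sq_sqrt hr.le
  rw [hscale, mul_div_right_comm, hfactor, ← intervalIntegral.integral_const_mul]
  congr 1 with t
  rw [rescaledIntegrand, sqrt_div' _ hr.le, div_div_eq_mul_div, div_mul_div_comm,
    div_mul_eq_mul_div, div_div, mul_comm √r]

theorem exists_eventually_abs_rescaledIntegrand_le (hκ : 0 < κ) (hg : HasStrictDerivAt g (-κ) 0)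
    (hh : HasDerivAt h a 0) (hh0 : h 0 = 0) :
    ∃ C, ∀ᶠ r in 𝓝[>] 0, ∀ t ∈ Set.Ioo (0 : ℝ) 1,
      |rescaledIntegrand g h r t| ≤ C * (1 / √(1 - t)) := by
  obtain ⟨C, hC, hbound⟩ := hh.isBigO_sub.exists_pos
  refine ⟨C / √(κ / 2), ?_⟩
  filter_upwards [eventually_forall_mem_Icc hbound.bound,
    eventually_mul_sub_le_sub_of_hasStrictDerivAt hg (half_lt_self hκ), self_mem_nhdsWithin]
    with r hnum hden (hr : 0 < r) t ht
  have hmem : r * t ∈ Set.Icc 0 r :=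
    ⟨mul_nonneg hr.le ht.1.le, mul_le_of_le_one_right hr.le ht.2.le⟩
  have hnum_le : |h (r * t) / r| ≤ C := by
    have hrt := hnum _ hmem
    rw [hh0, sub_zero, sub_zero, norm_eq_abs, norm_of_nonneg hmem.1] at hrt
    rw [abs_div, abs_of_pos hr, div_le_iff₀ hr]
    exact hrt.trans (by gcongr; exact hmem.2)
  have hden_ge : κ / 2 * (1 - t) ≤ (g (r * t) - g r) / r := by
    rw [le_div_iff₀ hr]
    linarith [hden _ hmem]
  have hsqrt : 0 < √(κ / 2) * √(1 - t) :=
    mul_pos (sqrt_pos.2 (half_pos hκ)) (sqrt_pos.2 (sub_pos.2 ht.2))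
  calc |rescaledIntegrand g h r t|
      = |h (r * t) / r| / √((g (r * t) - g r) / r) := by
        rw [rescaledIntegrand, abs_div, abs_of_nonneg (sqrt_nonneg _)]
    _ ≤ C / (√(κ / 2) * √(1 - t)) := by
        gcongr
        rw [← sqrt_mul (half_pos hκ).le]
        exact sqrt_le_sqrt hden_ge
    _ = C / √(κ / 2) * (1 / √(1 - t)) := by rw [div_mul_div_comm, mul_one]

theorem tendsto_rescaledIntegrand (hκ : 0 < κ) (hg : HasDerivAt g (-κ) 0) (hh : HasDerivAt h a 0)
    (hh0 : h 0 = 0) {t : ℝ} (ht : t < 1) :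
    Tendsto (rescaledIntegrand g h · t) (𝓝[>] 0)
      (𝓝 (a * t / √(κ * (1 - t)))) := by
  have hnum : Tendsto (fun r => h (r * t) / r) (𝓝[>] 0) (𝓝 (a * t)) := by
    simpa [hh0] using tendsto_sub_comp_mul_div hh t 0
  have hden : Tendsto (fun r => (g (r * t) - g r) / r) (𝓝[>] 0) (𝓝 (κ * (1 - t))) := by
    have hdiff := tendsto_sub_comp_mul_div hg t 1
    rw [show -κ * (t - 1) = κ * (1 - t) by ring] at hdiff
    simpa only [mul_one] using hdiff
  exact hnum.div hden.sqrt (sqrt_pos.2 (mul_pos hκ (sub_pos.2 ht))).ne'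

theorem eventually_aestronglyMeasurable_rescaledIntegrand {m : ℝ} (hg : HasStrictDerivAt g m 0)
    (hh : HasStrictDerivAt h a 0) :
    ∀ᶠ r in 𝓝[>] 0, AEStronglyMeasurable (rescaledIntegrand g h r)
      (volume.restrict (Set.uIoc 0 1)) := by
  filter_upwards [eventually_continuousOn_Icc_of_hasStrictDerivAt hg,
    eventually_continuousOn_Icc_of_hasStrictDerivAt hh, self_mem_nhdsWithin]
    with r hgr hhr (hr : 0 < r)
  have hmaps : Set.MapsTo (fun t => r * t) (Set.uIoc 0 1) (Set.Icc 0 r) := fun t ht => by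
    rw [Set.uIoc_of_le zero_le_one] at ht
    exact ⟨mul_nonneg hr.le ht.1.le, mul_le_of_le_one_right hr.le ht.2⟩
  have hscaled {u : ℝ → ℝ} (hu : ContinuousOn u (Set.Icc 0 r)) :
      AEMeasurable (fun t => u (r * t)) (volume.restrict (Set.uIoc 0 1)) :=
    (hu.comp (by fun_prop) hmaps).aemeasurable measurableSet_uIoc
  exact (((hscaled hhr).div_const r).div
    (((hscaled hgr).sub_const _).div_const r).sqrt).aestronglyMeasurable

theorem tendsto_integral_div_sqrt_sub (hκ : 0 < κ) (hg : HasStrictDerivAt g (-κ) 0)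
    (hh : HasStrictDerivAt h a 0) (hh0 : h 0 = 0) :
    Tendsto (fun r => (∫ x in (0 : ℝ)..r, h x / √(g x - g r)) / √r ^ 3) (𝓝[>] 0)
      (𝓝 (4 * a / (3 * √κ))) := by
  have hlimit : ∫ t in (0 : ℝ)..1, a * t / √(κ * (1 - t)) = 4 * a / (3 * √κ) := by
    calc ∫ t in (0 : ℝ)..1, a * t / √(κ * (1 - t))
        = ∫ t in (0 : ℝ)..1, a / √κ * (t / √(1 - t)) := by
          simp only [sqrt_mul hκ.le, mul_div_mul_comm]
      _ = 4 * a / (3 * √κ) := by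
          rw [intervalIntegral.integral_const_mul, integral_div_sqrt_one_sub]
          ring
  have hscale : ∀ᶠ r in 𝓝[>] 0, ∫ t in (0 : ℝ)..1, rescaledIntegrand g h r t =
      (∫ x in (0 : ℝ)..r, h x / √(g x - g r)) / √r ^ 3 :=
    eventually_mem_nhdsWithin.mono fun r hr => (integral_div_sqrt_sub_div_sqrt_cube hr).symm
  have hIoo : ∀ᵐ t : ℝ, t ∈ Set.uIoc 0 1 → t ∈ Set.Ioo (0 : ℝ) 1 := by
    filter_upwards [Measure.ae_ne volume 1] with t ht1 ht
    rw [Set.uIoc_of_le zero_le_one] at ht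
    exact ⟨ht.1, ht.2.lt_of_ne ht1⟩
  obtain ⟨C, hC⟩ := exists_eventually_abs_rescaledIntegrand_le hκ hg hh.hasDerivAt hh0
  rw [← hlimit]
  refine (intervalIntegral.tendsto_integral_filter_of_dominated_convergence
    (fun t => C * (1 / √(1 - t))) (eventually_aestronglyMeasurable_rescaledIntegrand hg hh) ?_
    (intervalIntegrable_one_div_sqrt_one_sub.const_mul C) ?_).congr' hscale
  · exact hC.mono fun r hr => hIoo.mono fun t ht hmem => hr t (ht hmem)
  · exact hIoo.mono fun t ht hmem =>
      tendsto_rescaledIntegrand hκ hg.hasDerivAt hh.hasDerivAt hh0 (ht hmem).2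

theorem tendsto_integral_div_sqrt_sub_div_sqrt_sub_cube (hκ : 0 < κ)
    (hg : HasStrictDerivAt g (-κ) 0) (hh : HasStrictDerivAt h a 0) (hh0 : h 0 = 0) :
    Tendsto (fun r => (∫ x in (0 : ℝ)..r, h x / √(g x - g r)) / √(g 0 - g r) ^ 3) (𝓝[>] 0)
      (𝓝 (4 * a / (3 * κ ^ 2))) := by
  have hdrop : Tendsto (fun r => √((g 0 - g r) / r) ^ 3) (𝓝[>] 0) (𝓝 (√κ ^ 3)) := by
    simpa using ((tendsto_sub_comp_mul_div hg.hasDerivAt 0 1).sqrt).pow 3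
  have hquot := (tendsto_integral_div_sqrt_sub hκ hg hh hh0).div hdrop
    (pow_ne_zero 3 (sqrt_pos.2 hκ).ne')
  have hvalue : 4 * a / (3 * √κ) / √κ ^ 3 = 4 * a / (3 * κ ^ 2) := by
    rw [div_div, mul_assoc, ← pow_succ', show √κ ^ (3 + 1) = (√κ ^ 2) ^ 2 by ring, sq_sqrt hκ.le]
  rw [hvalue] at hquot
  refine hquot.congr' ?_
  filter_upwards [self_mem_nhdsWithin] with r (hr : 0 < r)
  rw [Pi.div_apply, sqrt_div' _ hr.le, div_pow,
    div_div_div_cancel_right₀ (pow_ne_zero 3 (sqrt_pos.2 hr).ne')]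

end AbelIntegral

section TravellingWave

/-- The primitive `F(r) = ∫_r^1 f` of the nonlinearity `f`. -/
noncomputable def potential (f : ℝ → ℝ) (r : ℝ) : ℝ := ∫ ρ in r..1, f ρ

/-- The function `N_c(x) = c² x² - 4 (1 - x) F(1 - x)`, whose first positive zero is the amplitude
of the travelling wave of speed `c`. -/
noncomputable def newtonPotential (f : ℝ → ℝ) (c x : ℝ) : ℝ :=
  c ^ 2 * x ^ 2 - 4 * (1 - x) * potential f (1 - x)

/-- The momentum of a travelling wave of speed `c` and amplitude `r`. -/
noncomputable def momentum (f : ℝ → ℝ) (c r : ℝ) : ℝ :=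
  c / 2 * ∫ x in (0 : ℝ)..r, x ^ 2 / ((1 - x) * √(-(newtonPotential f c x)))

/-- The squared speed of the travelling wave of amplitude `x`, i.e. the value of `c ^ 2` for which
`newtonPotential f c x = 0`; at `x = 0` it is extended by the squared speed of sound. -/
noncomputable def speedSq (f : ℝ → ℝ) (x : ℝ) : ℝ :=
  4 * (1 - x) * Function.update (fun y => potential f (1 - y) / y ^ 2) 0 (-deriv f 1 / 2) x

variable {f : ℝ → ℝ} {c r x : ℝ}

theorem speedSq_zero : speedSq f 0 = -(2 * deriv f 1) := by
  rw [speedSq, Function.update_self]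
  ring

theorem neg_newtonPotential_eq (hx : x ≠ 0) :
    -newtonPotential f c x = x ^ 2 * (speedSq f x - c ^ 2) := by
  rw [newtonPotential, speedSq, Function.update_of_ne hx]
  field_simp
  ring

theorem speedSq_eq_of_newtonPotential_eq_zero (hx : x ≠ 0) (hN : newtonPotential f c x = 0) :
    speedSq f x = c ^ 2 := by
  have hprod := neg_newtonPotential_eq (f := f) (c := c) hx
  rw [hN, neg_zero, zero_eq_mul] at hprod
  exact sub_eq_zero.1 (hprod.resolve_left (pow_ne_zero 2 hx))

theorem momentum_eq_of_newtonPotential_eq_zero (hr : 0 < r) (hN : newtonPotential f c r = 0) :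
    momentum f c r =
      c / 2 * ∫ x in (0 : ℝ)..r, x / (1 - x) / √(speedSq f x - speedSq f r) := by
  rw [momentum, speedSq_eq_of_newtonPotential_eq_zero hr.ne' hN]
  congr 1
  refine intervalIntegral.integral_congr_ae (.of_forall fun x hx => ?_)
  rw [Set.uIoc_of_le hr.le] at hx
  rw [neg_newtonPotential_eq hx.1.ne', sqrt_mul (sq_nonneg x), sqrt_sq hx.1.le, sq,
    mul_left_comm, mul_div_mul_left _ _ hx.1.ne', div_div]

theorem eventually_hasDerivAt_potential (hf : ∀ᶠ ρ in 𝓝 1, ContinuousAt f ρ) :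
    ∀ᶠ r in 𝓝 1, HasDerivAt (potential f) (-f r) r := by
  obtain ⟨s, hs_cont, hs_open, hs_one⟩ := eventually_nhds_iff.1 hf
  have hseg : ∀ᶠ r in 𝓝 (1 : ℝ), Set.uIcc r 1 ⊆ s :=
    (tendsto_id.uIcc tendsto_const_nhds).eventually
      (eventually_smallSets_subset.2 (hs_open.mem_nhds hs_one))
  filter_upwards [hseg, hs_open.mem_nhds hs_one] with r hr hrs
  exact intervalIntegral.integral_hasDerivAt_left
    (ContinuousOn.intervalIntegrable fun ρ hρ => (hs_cont ρ (hr hρ)).continuousWithinAt)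
    (ContinuousAt.stronglyMeasurableAtFilter hs_open hs_cont r hrs) (hs_cont r hrs)

theorem hasStrictDerivAt_speedSq (hf : ∀ᶠ ρ in 𝓝 1, DifferentiableAt ℝ f ρ)
    (hf' : DifferentiableAt ℝ (deriv f) 1) (hf1 : f 1 = 0) :
    HasStrictDerivAt (speedSq f) ((2 * deriv (deriv f) 1 + 6 * deriv f 1) / 3) 0 := by
  have hreflect (x : ℝ) : HasDerivAt (fun x : ℝ => 1 - x) (-1) x := (hasDerivAt_id x).const_sub 1
  have hto_one : Tendsto (fun x : ℝ => 1 - x) (𝓝 0) (𝓝 1) := by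
    simpa using (hreflect 0).continuousAt.tendsto
  have hpot : ∀ᶠ x in 𝓝 0, HasDerivAt (fun x => potential f (1 - x)) (f (1 - x)) x :=
    (hto_one.eventually (eventually_hasDerivAt_potential
      (hf.mono fun _ h => h.continuousAt))).mono fun x hx =>
        (hx.comp x (hreflect x)).congr_deriv (by ring)
  have hfirst : ∀ᶠ x in 𝓝 0, HasDerivAt (fun x => f (1 - x)) (-deriv f (1 - x)) x :=
    (hto_one.eventually hf).mono fun x hx =>
      (hx.hasDerivAt.comp x (hreflect x)).congr_deriv (by ring)
  have hsecond : HasDerivAt (fun x => -deriv f (1 - x)) (deriv (deriv f) 1) 0 := by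
    have hderiv : HasDerivAt (deriv f) (deriv (deriv f) 1) (1 - 0) := by
      simpa using hf'.hasDerivAt
    exact ((hderiv.comp 0 (hreflect 0)).neg).congr_deriv (by ring)
  have hquot := hasStrictDerivAt_update_div_sq hpot hfirst hsecond (by simp [potential])
    (by simpa using hf1)
  simp only [sub_zero] at hquot
  refine (((hasStrictDerivAt_id 0).const_sub 1).const_mul 4 |>.mul hquot).congr_deriv ?_
  simp only [Function.update_self]
  ring

theorem hasStrictDerivAt_div_one_sub : HasStrictDerivAt (fun x : ℝ => x / (1 - x)) 1 0 :=
  ((hasStrictDerivAt_id 0).div ((hasStrictDerivAt_id 0).const_sub 1) (by simp)).congr_deriv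
    (by simp)

theorem stmt_11_general (hf : ∀ᶠ ρ in 𝓝 1, DifferentiableAt ℝ f ρ)
    (hf' : DifferentiableAt ℝ (deriv f) 1) (hf1 : f 1 = 0) (hf'1 : deriv f 1 < 0)
    {cs k : ℝ} (hcs : cs = √(-(2 * deriv f 1))) (hk : k = 2 * deriv (deriv f) 1 + 6 * deriv f 1)
    (hk0 : k ≠ 0) {ξ : ℝ → ℝ} (hξpos : ∀ᶠ c in 𝓝[<] cs, 0 < ξ c)
    (hzero : ∀ᶠ c in 𝓝[<] cs, newtonPotential f c (ξ c) = 0)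
    (hξ0 : Tendsto ξ (𝓝[<] cs) (𝓝 0)) :
    Tendsto (fun c => momentum f c (ξ c) / √(cs ^ 2 - c ^ 2) ^ 3) (𝓝[<] cs)
      (𝓝 (6 * cs / k ^ 2)) := by
  have hcs_sq : speedSq f 0 = cs ^ 2 := by rw [speedSq_zero, hcs, sq_sqrt (by linarith)]
  have hcs_pos : 0 < cs := hcs ▸ sqrt_pos.2 (by linarith)
  have hξ : Tendsto ξ (𝓝[<] cs) (𝓝[>] 0) := tendsto_nhdsWithin_iff.2 ⟨hξ0, hξpos⟩
  have hspeed : ∀ᶠ c in 𝓝[<] cs, speedSq f (ξ c) = c ^ 2 := by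
    filter_upwards [hξpos, hzero] with c hpos hN
    exact speedSq_eq_of_newtonPotential_eq_zero hpos.ne' hN
  have hderiv : HasStrictDerivAt (speedSq f) (k / 3) 0 := hk ▸ hasStrictDerivAt_speedSq hf hf' hf1
  have hsubsonic : ∀ᶠ c in 𝓝[<] cs, speedSq f (ξ c) ≤ speedSq f 0 := by
    filter_upwards [hspeed, Ioo_mem_nhdsLT hcs_pos] with c hc hmem
    rw [hc, hcs_sq]
    exact pow_le_pow_left₀ hmem.1.le hmem.2.le 2
  have hk_nonpos : k / 3 ≤ 0 :=
    nonpos_of_hasDerivAt_of_frequently_le hderiv.hasDerivAt (hξ.frequently hsubsonic.frequently)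
  have hk_neg : k < 0 := lt_of_le_of_ne (by linarith) hk0
  have habel := (tendsto_integral_div_sqrt_sub_div_sqrt_sub_cube (κ := -k / 3) (by linarith)
    (by convert hderiv using 1; ring) hasStrictDerivAt_div_one_sub (by simp)).comp hξ
  have hlim := ((tendsto_id.mono_left nhdsWithin_le_nhds).div_const 2).mul habel
  rw [show 6 * cs / k ^ 2 = cs / 2 * (4 * 1 / (3 * (-k / 3) ^ 2)) by field_simp; ring]
  refine hlim.congr' ?_
  filter_upwards [hξpos, hzero, hspeed] with c hpos hN hc
  rw [momentum_eq_of_newtonPotential_eq_zero hpos hN, ← hcs_sq, ← hc, mul_div_assoc]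
  rfl

end TravellingWave

/-- Transonic asymptotics of the momentum: `P(c)/ν_c³ → 6c_s/k²` as `c → c_s⁻`. -/
theorem stmt_11 (f : ℝ → ℝ) (U : Set ℝ) (hU : IsOpen U) (hUIcc : Set.Icc (0:ℝ) 1 ⊆ U)
    (hf : ContDiffOn ℝ 3 f U) (hf1 : f 1 = 0) (hf'1 : deriv f 1 < 0)
    (cs k : ℝ) (hcs : cs = Real.sqrt (-(2 * deriv f 1)))
    (hk : k = 2 * deriv (deriv f) 1 + 6 * deriv f 1) (hk0 : k ≠ 0)
    (F : ℝ → ℝ) (hF : ∀ r, F r = ∫ ρ in r..1, f ρ)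
    (c₀ : ℝ) (hc₀ : 0 < c₀) (hc₀cs : c₀ < cs)
    (ξ : ℝ → ℝ)
    (hξmem : ∀ c ∈ Set.Ioo c₀ cs, ξ c ∈ Set.Ioo (0:ℝ) 1)
    (hzero : ∀ c ∈ Set.Ioo c₀ cs,
      c ^ 2 * (ξ c) ^ 2 - 4 * (1 - ξ c) * F (1 - ξ c) = 0)
    (hneg : ∀ c ∈ Set.Ioo c₀ cs, ∀ x ∈ Set.Ioo 0 (ξ c),
      c ^ 2 * x ^ 2 - 4 * (1 - x) * F (1 - x) < 0)
    (hdN : ∀ c ∈ Set.Ioo c₀ cs,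
      0 < deriv (fun x => c ^ 2 * x ^ 2 - 4 * (1 - x) * F (1 - x)) (ξ c))
    (hξ0 : Tendsto ξ (𝓝[<] cs) (𝓝 0))
    (P : ℝ → ℝ)
    (hP : ∀ c, P c = (c / 2) * ∫ x in (0:ℝ)..(ξ c),
      x ^ 2 / ((1 - x) * Real.sqrt (-(c ^ 2 * x ^ 2 - 4 * (1 - x) * F (1 - x))))) :
    Tendsto (fun c => P c / (Real.sqrt (cs ^ 2 - c ^ 2)) ^ 3) (𝓝[<] cs)
      (𝓝 (6 * cs / k ^ 2)) := by
  obtain rfl : F = potential f := funext hF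
  obtain rfl : P = fun c => momentum f c (ξ c) := funext hP
  have hnhds : U ∈ 𝓝 1 := hU.mem_nhds (hUIcc (Set.right_mem_Icc.2 zero_le_one))
  have hIoo : ∀ᶠ c in 𝓝[<] cs, c ∈ Set.Ioo c₀ cs := Ioo_mem_nhdsLT hc₀cs
  exact stmt_11_general
    (((hf.contDiffAt hnhds).eventually (by simp)).mono fun _ h => h.differentiableAt (by simp))
    (((hf.deriv_of_isOpen (m := 1) hU (by norm_num)).contDiffAt hnhds).differentiableAt (by simp))
    hf1 hf'1 hcs hk hk0 (hIoo.mono fun c hc => (hξmem c hc).1) (hIoo.mono hzero) hξ0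
end

section
/- Assume k := 2 f''(1) + 6 f'(1) ≠ 0. Let 0 < c₀ < c_s and let ξ : (c₀, c_s) → (0,1) satisfy, for every c ∈ (c₀, c_s): N_c(ξ(c)) = 0, N_c(x) < 0 for every x ∈ (0, ξ(c)), ∂_x N_c(ξ(c)) > 0, and ξ(c) → 0 as c → c_s⁻. Then ∫_0^{ξ(c)} x / (ν_c √(−N_c(x))) dx → −6/k as c → c_s⁻. -/
open Real MeasureTheory Filter Topology

/-!
For `x ≠ 0` one has `-N_c(x) = x ^ 2 * (G x - c ^ 2)` with `G x = 4 (1 - x) F(1 - x) / x ^ 2`, and a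
second-order expansion of `f` at `1` shows that `G`, extended by `G 0 = c_s ^ 2`, is strictly
differentiable at `0` with derivative `k / 3`. Since `G (ξ c) = c ^ 2 < G 0`, this derivative is
negative and the integral is the value at `y = ξ c` of
`∫ x in 0..y, 1 / (√(G 0 - G y) * √(G x - G y))`. After the substitution `x = y * t`, strict
differentiability gives both the pointwise limit `1 / (-(k / 3) * √(1 - t))` of the integrand as
`y → 0⁺` and an integrable bound, and dominated convergence yields the limit `2 / (-(k / 3))`.
-/

section LittleO

variable {f g : ℝ → ℝ} {x₀ : ℝ} {n : ℕ}

theorem isLittleO_pow_succ_of_eventually_hasDerivAt (hfg : ∀ᶠ x in 𝓝 x₀, HasDerivAt f (g x) x)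
    (hg : g =o[𝓝 x₀] fun x ↦ (x - x₀) ^ n) :
    (fun x ↦ f x - f x₀) =o[𝓝 x₀] fun x ↦ (x - x₀) ^ (n + 1) := by
  obtain ⟨ε, hε, hball⟩ := Metric.eventually_nhds_iff_ball.1 hfg
  have hnhds : 𝓝[Metric.ball x₀ ε] x₀ = 𝓝 x₀ :=
    Metric.isOpen_ball.nhdsWithin_eq (Metric.mem_ball_self hε)
  rw [← hnhds] at hg ⊢
  exact (convex_ball x₀ ε).isLittleO_pow_succ_real (Metric.mem_ball_self hε)
    (fun x hx ↦ (hball x hx).hasDerivWithinAt) hg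

theorem hasStrictDerivAt_sub_div_pow_of_isLittleO (hfg : ∀ᶠ x in 𝓝 x₀, HasDerivAt f (g x) x)
    (hg : g =o[𝓝 x₀] fun x ↦ (x - x₀) ^ n) :
    HasStrictDerivAt (fun x ↦ (f x - f x₀) / (x - x₀) ^ n) 0 x₀ := by
  have hf := (isLittleO_pow_succ_of_eventually_hasDerivAt hfg hg).tendsto_div_nhds_zero
  set q' : ℝ → ℝ := fun x ↦ g x / (x - x₀) ^ n - n * ((f x - f x₀) / (x - x₀) ^ (n + 1)) with hq'
  have hq'_lim : Tendsto q' (𝓝 x₀) (𝓝 0) := by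
    simpa using hg.tendsto_div_nhds_zero.sub (hf.const_mul (n : ℝ))
  have hq'_zero : q' x₀ = 0 := eq_of_tendsto_nhds hq'_lim
  rw [← hq'_zero]
  refine hasStrictDerivAt_of_hasDerivAt_of_continuousAt ?_ (continuousAt_of_tendsto_nhds hq'_lim)
  filter_upwards [hfg] with x hx
  rcases eq_or_ne x x₀ with rfl | hne
  · rw [hq'_zero, hasDerivAt_iff_isLittleO, Asymptotics.isLittleO_iff_tendsto
      fun y hy ↦ by simp [sub_eq_zero.1 hy]]
    refine hf.congr fun y ↦ ?_
    rw [sub_self, zero_div, sub_zero, smul_zero, sub_zero, div_div, pow_succ]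
  · have hsub : x - x₀ ≠ 0 := sub_ne_zero.2 hne
    refine ((hx.sub_const (f x₀)).fun_div (((hasDerivAt_id x).sub_const x₀).fun_pow n)
      (pow_ne_zero n hsub)).congr_deriv ?_
    simp only [hq', id]
    rcases n with _ | n
    · simp
    · simp only [Nat.add_sub_cancel]
      field_simp
      ring

theorem isLittleO_sub_taylor_two {b : ℝ} (hfg : ∀ᶠ x in 𝓝 x₀, HasDerivAt f (g x) x)
    (hg : HasDerivAt g b x₀) :
    (fun x ↦ f x - (f x₀ + g x₀ * (x - x₀) + b / 2 * (x - x₀) ^ 2)) =o[𝓝 x₀]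
      fun x ↦ (x - x₀) ^ 2 := by
  have hderiv : ∀ᶠ x in 𝓝 x₀, HasDerivAt
      (fun x ↦ f x - (f x₀ + g x₀ * (x - x₀) + b / 2 * (x - x₀) ^ 2))
      (g x - g x₀ - (x - x₀) * b) x := by
    filter_upwards [hfg] with x hx
    have hlin : HasDerivAt (fun x ↦ x - x₀) 1 x := (hasDerivAt_id x).sub_const x₀
    refine (hx.sub (((hlin.const_mul (g x₀)).const_add (f x₀)).fun_add
      ((hlin.fun_pow 2).const_mul (b / 2)))).congr_deriv ?_
    simp only [mul_one, Nat.cast_ofNat, Nat.add_one_sub_one, pow_one]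
    ring
  simpa using isLittleO_pow_succ_of_eventually_hasDerivAt (n := 1) hderiv
    (by simpa using hg.isLittleO)

end LittleO

theorem eventually_hasDerivAt_integral_left {f : ℝ → ℝ} {b : ℝ}
    (hf : ∀ᶠ x in 𝓝 b, ContinuousAt f x) :
    ∀ᶠ a in 𝓝 b, HasDerivAt (fun a ↦ ∫ x in a..b, f x) (-f a) a := by
  obtain ⟨ε, hε, hball⟩ := Metric.eventually_nhds_iff_ball.1 hf
  have hcont : ContinuousOn f (Metric.ball b ε) := fun x hx ↦ (hball x hx).continuousWithinAt
  filter_upwards [Metric.ball_mem_nhds b hε] with a ha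
  refine intervalIntegral.integral_hasDerivAt_left ?_
    (hcont.stronglyMeasurableAtFilter Metric.isOpen_ball a ha) (hball a ha)
  refine (hcont.mono ?_).intervalIntegrable
  exact (convex_ball b ε).ordConnected.uIcc_subset ha (Metric.mem_ball_self hε)

theorem hasStrictDerivAt_integral_remainder_div_sq {f : ℝ → ℝ} {b : ℝ} (hf : ContDiffAt ℝ 2 f b)
    (hfb : f b = 0) :
    HasStrictDerivAt (fun r ↦ ((∫ ρ in r..b, f ρ) + deriv f b / 2 * (r - b) ^ 2
      + deriv (deriv f) b / 6 * (r - b) ^ 3) / (r - b) ^ 2) 0 b := by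
  have hf_deriv : ∀ᶠ r in 𝓝 b, HasDerivAt f (deriv f r) r :=
    (hf.eventually (by simp)).mono fun r hr ↦ (hr.differentiableAt (by simp)).hasDerivAt
  have hf_deriv2 : HasDerivAt (deriv f) (deriv (deriv f) b) b :=
    ((hf.derivWithin (m := 1) (by norm_num)).differentiableAt (by simp)).hasDerivAt
  have htaylor := (isLittleO_sub_taylor_two hf_deriv hf_deriv2).neg_left
  have hremainder : ∀ᶠ r in 𝓝 b, HasDerivAt
      (fun r ↦ (∫ ρ in r..b, f ρ) + deriv f b / 2 * (r - b) ^ 2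
        + deriv (deriv f) b / 6 * (r - b) ^ 3)
      (-(f r - (f b + deriv f b * (r - b) + deriv (deriv f) b / 2 * (r - b) ^ 2))) r := by
    filter_upwards [eventually_hasDerivAt_integral_left
      (hf_deriv.mono fun r hr ↦ hr.continuousAt)] with r hr
    have hlin : HasDerivAt (fun r ↦ r - b) 1 r := (hasDerivAt_id r).sub_const b
    refine ((hr.fun_add ((hlin.fun_pow 2).const_mul _)).fun_add
      ((hlin.fun_pow 3).const_mul _)).congr_deriv ?_
    rw [hfb]
    simp only [Nat.cast_ofNat, Nat.add_one_sub_one, pow_one, mul_one, zero_add]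
    ring
  simpa using hasStrictDerivAt_sub_div_pow_of_isLittleO hremainder htaylor

theorem eventually_Icc_subset_of_mem_nhds {s : Set ℝ} {x₀ : ℝ} (hs : s ∈ 𝓝 x₀) :
    ∀ᶠ y in 𝓝 x₀, Set.Icc x₀ y ⊆ s :=
  (tendsto_const_nhds.Icc tendsto_id).eventually (eventually_smallSets_subset.2 hs)

theorem intervalIntegrable_inv_sqrt_one_sub :
    IntervalIntegrable (fun t : ℝ ↦ (√(1 - t))⁻¹) volume 0 1 := by
  have h := (intervalIntegral.intervalIntegrable_rpow' (a := 0) (b := 1)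
    (r := (-(1 / 2) : ℝ)) (by norm_num)).comp_sub_left 1
  rw [sub_zero, sub_self] at h
  refine h.symm.congr fun t ht ↦ ?_
  rw [Set.uIoc_of_le zero_le_one] at ht
  simp only [rpow_neg (sub_nonneg.2 ht.2), sqrt_eq_rpow]

theorem integral_inv_sqrt_one_sub : ∫ t in (0 : ℝ)..1, (√(1 - t))⁻¹ = 2 := by
  have hrpow : Set.EqOn (fun u : ℝ ↦ (√u)⁻¹) (fun u ↦ u ^ (-(1 / 2) : ℝ)) (Set.uIcc 0 1) :=
    fun u hu ↦ by
      rw [Set.uIcc_of_le zero_le_one] at hu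
      simp only [rpow_neg hu.1, sqrt_eq_rpow]
  rw [intervalIntegral.integral_comp_sub_left (fun u ↦ (√u)⁻¹), sub_self, sub_zero,
    intervalIntegral.integral_congr hrpow, integral_rpow (Or.inl (by norm_num))]
  norm_num

theorem sqrt_mul_sqrt_mul {a : ℝ} (ha : 0 ≤ a) (s : ℝ) : √a * √(a * s) = a * √s := by
  rw [sqrt_mul ha, ← mul_assoc, mul_self_sqrt ha]

section StrictDerivative

variable {G : ℝ → ℝ} {b : ℝ}

theorem tendsto_comp_mul_sub_div (hG : HasDerivAt G b 0) (t : ℝ) :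
    Tendsto (fun y ↦ (G (y * t) - G y) / y) (𝓝[>] 0) (𝓝 (-b * (1 - t))) := by
  have hscale : HasDerivAt (fun y ↦ G (y * t)) (b * t) 0 :=
    HasDerivAt.comp (h₂ := G) 0 (by simpa using hG) (hasDerivAt_mul_const t)
  have hlim := (hscale.sub hG).tendsto_slope_zero_right
  rw [show b * t - b = -b * (1 - t) by ring] at hlim
  refine hlim.congr fun y ↦ ?_
  simp [div_eq_inv_mul]

theorem eventually_half_slope_le (hG : HasStrictDerivAt G b 0) (hb : b < 0) :
    ∀ᶠ y in 𝓝[>] 0, ∀ t ∈ Set.Icc (0 : ℝ) 1, -b / 2 * (1 - t) ≤ (G (y * t) - G y) / y := by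
  have hlin : ∀ᶠ p in 𝓝 (0 : ℝ) ×ˢ 𝓝 0,
      ‖G p.1 - G p.2 - (p.1 - p.2) * b‖ ≤ -b / 2 * ‖p.1 - p.2‖ := by
    have := hG.hasStrictFDerivAt.isLittleO.def (c := -b / 2) (by linarith)
    rw [← nhds_prod_eq]
    simpa using this
  obtain ⟨s, hs, hsG⟩ := (eventually_prod_self_iff
    (r := fun x y ↦ ‖G x - G y - (x - y) * b‖ ≤ -b / 2 * ‖x - y‖)).1 hlin
  filter_upwards [nhdsWithin_le_nhds (eventually_Icc_subset_of_mem_nhds hs), self_mem_nhdsWithin]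
    with y hys (hy : 0 < y) t ht
  have hyt : y * t ≤ y := mul_le_of_le_one_right hy.le ht.2
  have hbound := hsG (y * t) (hys ⟨mul_nonneg hy.le ht.1, hyt⟩) y (hys ⟨hy.le, le_rfl⟩)
  rw [norm_eq_abs, norm_eq_abs, abs_of_nonpos (sub_nonpos.2 hyt)] at hbound
  rw [le_div_iff₀ hy]
  linarith [neg_le_of_abs_le hbound]

theorem eventually_continuousOn_Icc {x₀ : ℝ} (hG : HasStrictDerivAt G b x₀) :
    ∀ᶠ y in 𝓝[>] x₀, ContinuousOn G (Set.Icc x₀ y) := by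
  obtain ⟨K, s, hs, hlip⟩ := hG.hasStrictFDerivAt.exists_lipschitzOnWith
  exact nhdsWithin_le_nhds
    ((eventually_Icc_subset_of_mem_nhds hs).mono fun y hy ↦ hlip.continuousOn.mono hy)

theorem integral_inv_sqrt_mul_sqrt_eq_scaled (G : ℝ → ℝ) {y : ℝ} (hy : 0 < y) :
    ∫ x in (0 : ℝ)..y, (√(G 0 - G y) * √(G x - G y))⁻¹ =
      ∫ t in (0 : ℝ)..1, (√((G 0 - G y) / y) * √((G (y * t) - G y) / y))⁻¹ := by
  have hscale := intervalIntegral.mul_integral_comp_mul_left (a := 0) (b := 1)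
    (f := fun x ↦ (√(G 0 - G y) * √(G x - G y))⁻¹) y
  rw [mul_zero, mul_one, ← intervalIntegral.integral_const_mul] at hscale
  rw [← hscale]
  refine intervalIntegral.integral_congr fun t _ ↦ ?_
  simp only [sqrt_div' _ hy.le, div_mul_div_comm, mul_self_sqrt hy.le, inv_div]
  rw [div_eq_mul_inv]

theorem tendsto_inv_sqrt_mul_sqrt_scaled (hG : HasDerivAt G b 0) (hb : b < 0) {t : ℝ}
    (ht : t < 1) :
    Tendsto (fun y ↦ (√((G 0 - G y) / y) * √((G (y * t) - G y) / y))⁻¹) (𝓝[>] 0)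
      (𝓝 ((-b)⁻¹ * (√(1 - t))⁻¹)) := by
  have hb' : 0 < -b := neg_pos.2 hb
  have hfirst := (tendsto_comp_mul_sub_div hG 0).sqrt
  have hlim := hfirst.mul (tendsto_comp_mul_sub_div hG t).sqrt
  simp only [mul_zero, sub_zero, mul_one, sqrt_mul_sqrt_mul hb'.le] at hlim
  rw [← mul_inv]
  exact hlim.inv₀ (mul_pos hb' (sqrt_pos.2 (sub_pos.2 ht))).ne'

theorem eventually_norm_inv_sqrt_mul_sqrt_scaled_le (hG : HasStrictDerivAt G b 0) (hb : b < 0) :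
    ∀ᶠ y in 𝓝[>] 0, ∀ t ∈ Set.Ico (0 : ℝ) 1,
      ‖(√((G 0 - G y) / y) * √((G (y * t) - G y) / y))⁻¹‖ ≤ (-b / 2)⁻¹ * (√(1 - t))⁻¹ := by
  have ha : 0 < -b / 2 := by linarith
  filter_upwards [eventually_half_slope_le hG hb] with y hslope t ht
  have ht' : 0 < 1 - t := sub_pos.2 ht.2
  have hslope_zero := hslope 0 (by simp)
  rw [mul_zero, sub_zero, mul_one] at hslope_zero
  rw [norm_of_nonneg (by positivity), ← mul_inv, ← sqrt_mul_sqrt_mul ha.le]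
  gcongr
  exact hslope t ⟨ht.1, ht.2.le⟩

theorem eventually_aestronglyMeasurable_inv_sqrt_mul_sqrt_scaled (hG : HasStrictDerivAt G b 0) :
    ∀ᶠ y in 𝓝[>] 0, AEStronglyMeasurable
      (fun t ↦ (√((G 0 - G y) / y) * √((G (y * t) - G y) / y))⁻¹)
      (volume.restrict (Set.uIoc 0 1)) := by
  filter_upwards [eventually_continuousOn_Icc hG, self_mem_nhdsWithin] with y hcont (hy : 0 < y)
  have hcomp : ContinuousOn (fun t ↦ G (y * t)) (Set.uIoc 0 1) := by
    refine hcont.comp (by fun_prop) fun t ht ↦ ?_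
    rw [Set.uIoc_of_le zero_le_one] at ht
    exact ⟨mul_nonneg hy.le ht.1.le, mul_le_of_le_one_right hy.le ht.2⟩
  exact ((((hcomp.aemeasurable measurableSet_uIoc).sub_const _).div_const y).sqrt.const_mul
    _).inv.aestronglyMeasurable

theorem tendsto_integral_inv_sqrt_mul_sqrt (hG : HasStrictDerivAt G b 0) (hb : b < 0) :
    Tendsto (fun y ↦ ∫ x in (0 : ℝ)..y, (√(G 0 - G y) * √(G x - G y))⁻¹)
      (𝓝[>] 0) (𝓝 (-2 / b)) := by
  have hlimit : ∫ t in (0 : ℝ)..1, (-b)⁻¹ * (√(1 - t))⁻¹ = -2 / b := by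
    rw [intervalIntegral.integral_const_mul, integral_inv_sqrt_one_sub]
    ring
  have hmem : ∀ᵐ t : ℝ, t ∈ Set.uIoc (0 : ℝ) 1 → t ∈ Set.Ico (0 : ℝ) 1 := by
    filter_upwards [volume.ae_ne 1] with t ht1 ht
    rw [Set.uIoc_of_le zero_le_one] at ht
    exact ⟨ht.1.le, ht.2.lt_of_ne ht1⟩
  have hscaled : (fun y ↦ ∫ t in (0 : ℝ)..1, (√((G 0 - G y) / y) * √((G (y * t) - G y) / y))⁻¹)
      =ᶠ[𝓝[>] 0] fun y ↦ ∫ x in (0 : ℝ)..y, (√(G 0 - G y) * √(G x - G y))⁻¹ :=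
    eventually_nhdsWithin_of_forall fun y hy ↦ (integral_inv_sqrt_mul_sqrt_eq_scaled G hy).symm
  rw [← hlimit]
  refine (intervalIntegral.tendsto_integral_filter_of_dominated_convergence
    (fun t ↦ (-b / 2)⁻¹ * (√(1 - t))⁻¹)
    (eventually_aestronglyMeasurable_inv_sqrt_mul_sqrt_scaled hG) ?_
    (intervalIntegrable_inv_sqrt_one_sub.const_mul _) ?_).congr' hscaled
  · filter_upwards [eventually_norm_inv_sqrt_mul_sqrt_scaled_le hG hb] with y hbound
    filter_upwards [hmem] with t ht htIoc using hbound t (ht htIoc)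
  · filter_upwards [hmem] with t ht htIoc
    exact tendsto_inv_sqrt_mul_sqrt_scaled hG.hasDerivAt hb (ht htIoc).2

theorem nonpos_of_hasDerivAt_of_eventually_le {ι : Type*} {l : Filter ι} [l.NeBot] {ξ : ι → ℝ}
    (hG : HasDerivAt G b 0) (hξ : Tendsto ξ l (𝓝[>] 0)) (hle : ∀ᶠ c in l, G (ξ c) ≤ G 0) :
    b ≤ 0 := by
  have hslope : Tendsto (fun c ↦ slope G 0 (ξ c)) l (𝓝 b) :=
    hG.tendsto_slope.comp (hξ.mono_right (nhdsWithin_mono 0 fun x hx ↦ ne_of_gt hx))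
  refine le_of_tendsto hslope ?_
  filter_upwards [hle, hξ self_mem_nhdsWithin] with c hc (hpos : 0 < ξ c)
  rw [slope_def_field]
  exact div_nonpos_of_nonpos_of_nonneg (sub_nonpos.2 hc) (sub_nonneg.2 hpos.le)

end StrictDerivative

/-- The value of `c ^ 2` for which `N_c(x) = 0`, as a function of `x`. At `x = 0`, where `N_c`
vanishes for every `c`, it takes the limiting value, the square of the speed of sound. -/
noncomputable def squaredSpeed (f : ℝ → ℝ) : ℝ → ℝ :=
  Function.update (fun x ↦ 4 * (1 - x) * (∫ ρ in (1 - x)..1, f ρ) / x ^ 2) 0 (-(2 * deriv f 1))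

theorem squaredSpeed_zero (f : ℝ → ℝ) : squaredSpeed f 0 = -(2 * deriv f 1) :=
  Function.update_self ..

theorem squaredSpeed_of_ne_zero (f : ℝ → ℝ) {x : ℝ} (hx : x ≠ 0) :
    squaredSpeed f x = 4 * (1 - x) * (∫ ρ in (1 - x)..1, f ρ) / x ^ 2 :=
  Function.update_of_ne hx ..

theorem hasStrictDerivAt_squaredSpeed {f : ℝ → ℝ} (hf : ContDiffAt ℝ 2 f 1) (hf1 : f 1 = 0) :
    HasStrictDerivAt (squaredSpeed f) ((2 * deriv (deriv f) 1 + 6 * deriv f 1) / 3) 0 := by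
  set S : ℝ → ℝ := fun r ↦ ((∫ ρ in r..1, f ρ) + deriv f 1 / 2 * (r - 1) ^ 2
    + deriv (deriv f) 1 / 6 * (r - 1) ^ 3) / (r - 1) ^ 2 with hS
  have hS_one : S 1 = 0 := by simp [hS]
  have hexpand : squaredSpeed f = fun x ↦ 4 * (1 - x) *
      (-(deriv f 1 / 2) + deriv (deriv f) 1 / 6 * x + S (1 - x)) := by
    funext x
    rcases eq_or_ne x 0 with rfl | hx
    · rw [squaredSpeed_zero, sub_zero, hS_one]
      ring
    · simp only [squaredSpeed_of_ne_zero f hx, hS, sub_sub_cancel_left, neg_sq]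
      field_simp
      ring
  have hid : HasStrictDerivAt (fun x : ℝ ↦ x) 1 0 := hasStrictDerivAt_id 0
  have hone_sub : HasStrictDerivAt (fun x : ℝ ↦ 1 - x) (-1) 0 := hid.const_sub 1
  have hS_deriv : HasStrictDerivAt S 0 (1 - 0) := by
    simpa using hasStrictDerivAt_integral_remainder_div_sq hf hf1
  rw [hexpand]
  refine ((hone_sub.const_mul 4).fun_mul (((hid.const_mul _).const_add _).fun_add
    (hS_deriv.comp 0 hone_sub))).congr_deriv ?_
  simp only [Function.comp_apply, sub_zero, hS_one]
  ring

theorem neg_sub_eq_sq_mul_squaredSpeed_sub (f : ℝ → ℝ) (c : ℝ) {x : ℝ} (hx : x ≠ 0) :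
    -(c ^ 2 * x ^ 2 - 4 * (1 - x) * ∫ ρ in (1 - x)..1, f ρ) =
      x ^ 2 * (squaredSpeed f x - c ^ 2) := by
  rw [squaredSpeed_of_ne_zero f hx]
  field_simp
  ring

theorem squaredSpeed_eq_sq_of_eq_zero {f : ℝ → ℝ} {c x : ℝ} (hx : x ≠ 0)
    (hzero : c ^ 2 * x ^ 2 - 4 * (1 - x) * ∫ ρ in (1 - x)..1, f ρ = 0) :
    squaredSpeed f x = c ^ 2 := by
  have hfactor := neg_sub_eq_sq_mul_squaredSpeed_sub f c hx
  rw [hzero, neg_zero, zero_eq_mul, or_iff_right (pow_ne_zero 2 hx)] at hfactor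
  exact sub_eq_zero.1 hfactor

theorem integral_div_eq_integral_inv_squaredSpeed (f : ℝ → ℝ) (w c : ℝ) {y : ℝ} (hy : 0 < y) :
    ∫ x in (0 : ℝ)..y,
        x / (w * √(-(c ^ 2 * x ^ 2 - 4 * (1 - x) * ∫ ρ in (1 - x)..1, f ρ))) =
      ∫ x in (0 : ℝ)..y, (w * √(squaredSpeed f x - c ^ 2))⁻¹ := by
  refine intervalIntegral.integral_congr_uIoo fun x hx ↦ ?_
  rw [Set.uIoo_of_le hy.le] at hx
  have hx0 : x ≠ 0 := hx.1.ne'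
  simp only [neg_sub_eq_sq_mul_squaredSpeed_sub f c hx0, sqrt_mul (sq_nonneg x),
    sqrt_sq hx.1.le]
  rw [mul_left_comm, div_mul_cancel_left₀ hx0]

theorem stmt_13_general (f : ℝ → ℝ) (hf : ContDiffAt ℝ 2 f 1) (hf1 : f 1 = 0)
    (hf'1 : deriv f 1 < 0)
    (cs k : ℝ) (hcs : cs = √(-(2 * deriv f 1)))
    (hk : k = 2 * deriv (deriv f) 1 + 6 * deriv f 1) (hk0 : k ≠ 0)
    (F : ℝ → ℝ) (hF : ∀ r, F r = ∫ ρ in r..1, f ρ)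
    (ξ : ℝ → ℝ) (hξpos : ∀ᶠ c in 𝓝[<] cs, 0 < ξ c)
    (hzero : ∀ᶠ c in 𝓝[<] cs, c ^ 2 * (ξ c) ^ 2 - 4 * (1 - ξ c) * F (1 - ξ c) = 0)
    (hξ0 : Tendsto ξ (𝓝[<] cs) (𝓝 0)) :
    Tendsto (fun c ↦ ∫ x in (0 : ℝ)..(ξ c),
        x / (√(cs ^ 2 - c ^ 2) * √(-(c ^ 2 * x ^ 2 - 4 * (1 - x) * F (1 - x)))))
      (𝓝[<] cs) (𝓝 (-6 / k)) := by
  obtain rfl : F = fun r ↦ ∫ ρ in r..1, f ρ := funext hF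
  have hcs_pos : 0 < cs := hcs ▸ sqrt_pos.2 (by linarith)
  have hspeed_zero : squaredSpeed f 0 = cs ^ 2 := by
    rw [squaredSpeed_zero, hcs, sq_sqrt (by linarith)]
  have hspeed_deriv : HasStrictDerivAt (squaredSpeed f) (k / 3) 0 :=
    hk ▸ hasStrictDerivAt_squaredSpeed hf hf1
  have hspeed_ξ : ∀ᶠ c in 𝓝[<] cs, squaredSpeed f (ξ c) = c ^ 2 := by
    filter_upwards [hξpos, hzero] with c hpos hc using squaredSpeed_eq_sq_of_eq_zero hpos.ne' hc
  have hξ_right : Tendsto ξ (𝓝[<] cs) (𝓝[>] 0) := tendsto_nhdsWithin_iff.2 ⟨hξ0, hξpos⟩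
  have hspeed_le : ∀ᶠ c in 𝓝[<] cs, squaredSpeed f (ξ c) ≤ squaredSpeed f 0 := by
    filter_upwards [hspeed_ξ, Ioo_mem_nhdsLT hcs_pos] with c hc hc_mem
    rw [hc, hspeed_zero]
    exact pow_le_pow_left₀ hc_mem.1.le hc_mem.2.le 2
  have hk_neg : k / 3 < 0 :=
    (nonpos_of_hasDerivAt_of_eventually_le hspeed_deriv.hasDerivAt hξ_right hspeed_le).lt_of_ne
      (div_ne_zero hk0 three_ne_zero)
  have hlim := (tendsto_integral_inv_sqrt_mul_sqrt hspeed_deriv hk_neg).comp hξ_right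
  rw [show -2 / (k / 3) = -6 / k by ring] at hlim
  refine hlim.congr' ?_
  filter_upwards [hξpos, hspeed_ξ] with c hpos hc
  rw [integral_div_eq_integral_inv_squaredSpeed f _ c hpos, Function.comp_apply, hspeed_zero, hc]

/-- Limit of the rescaled integral: `∫₀^{ξ(c)} x/(ν_c √(-N_c(x))) dx → -6/k`
as `c → c_s⁻`. -/
theorem stmt_13 (f : ℝ → ℝ) (U : Set ℝ) (hU : IsOpen U) (hUIcc : Set.Icc (0:ℝ) 1 ⊆ U)
    (hf : ContDiffOn ℝ 3 f U) (hf1 : f 1 = 0) (hf'1 : deriv f 1 < 0)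
    (cs k : ℝ) (hcs : cs = Real.sqrt (-(2 * deriv f 1)))
    (hk : k = 2 * deriv (deriv f) 1 + 6 * deriv f 1) (hk0 : k ≠ 0)
    (F : ℝ → ℝ) (hF : ∀ r, F r = ∫ ρ in r..1, f ρ)
    (c₀ : ℝ) (hc₀ : 0 < c₀) (hc₀cs : c₀ < cs)
    (ξ : ℝ → ℝ)
    (hξmem : ∀ c ∈ Set.Ioo c₀ cs, ξ c ∈ Set.Ioo (0:ℝ) 1)
    (hzero : ∀ c ∈ Set.Ioo c₀ cs,
      c ^ 2 * (ξ c) ^ 2 - 4 * (1 - ξ c) * F (1 - ξ c) = 0)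
    (hneg : ∀ c ∈ Set.Ioo c₀ cs, ∀ x ∈ Set.Ioo 0 (ξ c),
      c ^ 2 * x ^ 2 - 4 * (1 - x) * F (1 - x) < 0)
    (hdN : ∀ c ∈ Set.Ioo c₀ cs,
      0 < deriv (fun x => c ^ 2 * x ^ 2 - 4 * (1 - x) * F (1 - x)) (ξ c))
    (hξ0 : Tendsto ξ (𝓝[<] cs) (𝓝 0)) :
    Tendsto (fun c => ∫ x in (0:ℝ)..(ξ c),
        x / (Real.sqrt (cs ^ 2 - c ^ 2) *
          Real.sqrt (-(c ^ 2 * x ^ 2 - 4 * (1 - x) * F (1 - x)))))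
      (𝓝[<] cs) (𝓝 (-6 / k)) := by
  have hIoo : Set.Ioo c₀ cs ∈ 𝓝[<] cs := Ioo_mem_nhdsLT hc₀cs
  exact stmt_13_general f
    ((hf.contDiffAt (hU.mem_nhds (hUIcc (by simp)))).of_le (by norm_num)) hf1 hf'1 cs k hcs hk hk0
    F hF ξ (mem_of_superset hIoo fun c hc ↦ (hξmem c hc).1) (mem_of_superset hIoo hzero) hξ0
end
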